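/- Integration by parts on spaces of martingale dimension one (Theorem 'IbP'): suppose b is divergence free with respect to B. Let f₁, f₂ ∈ D(∂_B^⊥) admit representations fᵢ = j gᵢ + U^{-1}(∂uᵢ) + wᵢ with gᵢ, uᵢ ∈ 𝒞, ∂uᵢ ∈ D(∂_B*), wᵢ ∈ ker ∂^⊥, and assume zᵢ := ∂_B^⊥ fᵢ − U^{-1}(∂gᵢ) ∈ ker ∂^⊥ (i = 1,2). Then ⟨∂_B^⊥ f₁, f₂⟩_{H₀} + ⟨f₁, ∂_B^⊥ f₂⟩_{H₀} = n_B(f₁b)(g₂) + n_B(f₂b)(g₁) − n_B b(g₁g₂) + ⟨w₁, z₂⟩_{H₀} + ⟨z₁, w₂⟩_{H₀}. -/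

import Mathlib

open RealInnerProductSpace ContinuousMap

set_option synthInstance.maxHeartbeats 1000000
set_option maxHeartbeats 1000000

/-!
Rotate gradients into `H₀`: put `δ φ = U⁻¹(∂φ)`. With `D = δ g₁ + z` and `f₂ = j g₂ + δ u + w`,
expanding `⟪D, f₂ - j g₂⟫` and using `z ⊥ δ u` gives
`⟪D, f₂⟫ = ⟪D, j g₂⟫ + ⟪f₂, δ g₁⟫ - ⟪j g₂, δ g₁⟫ + ⟪z, w⟫`.
Adding the same identity with the indices exchanged produces the two normal parts, while the
remaining terms `⟪j g₂, δ g₁⟫ + ⟪j g₁, δ g₂⟫` combine to `⟪b, ∂(g₁ g₂)⟫` by the Leibniz rule.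
-/

theorem inner_eq_add_of_inner_sub_eq_zero {𝕜 E : Type*} [RCLike 𝕜] [SeminormedAddCommGroup E]
    [InnerProductSpace 𝕜 E] {x a y p c w : E} (hy : y = p + c + w) (hc : inner 𝕜 (x - a) c = 0) :
    inner 𝕜 x y = inner 𝕜 x p + (inner 𝕜 a y - inner 𝕜 a p) + inner 𝕜 (x - a) w := by
  have h : inner 𝕜 (x - a) (y - p) = inner 𝕜 (x - a) w := by
    rw [hy, add_assoc, add_sub_cancel_left, inner_add_right, hc, zero_add]
  rw [← h, inner_sub_left, inner_sub_right, inner_sub_right]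
  ring

section MartingaleDimensionOne

variable {A H H₀ : Type*}
  [NonUnitalNonAssocSemiring A] [Module ℝ A]
  [NormedAddCommGroup H] [InnerProductSpace ℝ H]
  [NormedAddCommGroup H₀] [InnerProductSpace ℝ H₀]

theorem inner_map_mul_of_leibniz {act : A →ₗ[ℝ] H →ₗ[ℝ] H} {par : A →ₗ[ℝ] H}
    (hact_symm : ∀ (f : A) (v w : H), ⟪act f v, w⟫ = ⟪v, act f w⟫)
    (hLeibniz : ∀ f g : A, par (f * g) = act f (par g) + act g (par f)) (b : H) (f g : A) :
    ⟪b, par (f * g)⟫ = ⟪act f b, par g⟫ + ⟪act g b, par f⟫ := by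
  rw [hLeibniz, inner_add_right, hact_symm, hact_symm]

/-- The space `ker ∂^⊥ ⊆ H₀` of vectors whose image under the Hodge star `U` is orthogonal to all
gradients `∂φ`. -/
noncomputable def perpKer (par : A →ₗ[ℝ] H) (U : H₀ ≃ₗᵢ[ℝ] H) : Submodule ℝ H₀ :=
  (LinearMap.range par)ᗮ.comap U.toLinearEquiv.toLinearMap

/-- The normal part `φ ↦ ⟪U f, ∂φ⟫ + ⟪D, j φ⟫` of the vector field `U f`. The value `D` of
`∂_B^⊥ f` is an argument, so that `B` enters only through the choice of `D`. -/
noncomputable def normalPart (j : A →ₗ[ℝ] H₀) (par : A →ₗ[ℝ] H) (U : H₀ ≃ₗᵢ[ℝ] H) (f D : H₀) :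
    A →ₗ[ℝ] ℝ :=
  innerₗ H (U f) ∘ₗ par + innerₗ H₀ D ∘ₗ j

variable {j : A →ₗ[ℝ] H₀} {par : A →ₗ[ℝ] H} {U : H₀ ≃ₗᵢ[ℝ] H}

theorem mem_perpKer {z : H₀} : z ∈ perpKer par U ↔ ∀ φ : A, ⟪U z, par φ⟫ = 0 := by
  simp [perpKer, Submodule.mem_orthogonal']

theorem normalPart_apply (f D : H₀) (φ : A) :
    normalPart j par U f D φ = ⟪U f, par φ⟫ + ⟪D, j φ⟫ :=
  rfl

theorem inner_eq_of_sub_mem_perpKer {D f p w : H₀} {g u : A}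
    (hz : D - U.symm (par g) ∈ perpKer par U) (hf : f = p + U.symm (par u) + w) :
    ⟪D, f⟫ = ⟪D, p⟫ + (⟪U f, par g⟫ - ⟪U p, par g⟫) + ⟪D - U.symm (par g), w⟫ := by
  have hzu : ⟪D - U.symm (par g), U.symm (par u)⟫ = 0 := by
    rw [← U.inner_map_eq_flip, mem_perpKer.1 hz]
  have hswap (v : H₀) : ⟪U.symm (par g), v⟫ = ⟪U v, par g⟫ := by
    rw [U.inner_map_eq_flip, real_inner_comm]
  rw [inner_eq_add_of_inner_sub_eq_zero hf hzu, hswap, hswap]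

/-- The test class `S` plays the role of `𝒞_B`, and `-dᵢ` that of `∂_B^⊥ fᵢ`. -/
theorem stmt_10_general {act : A →ₗ[ℝ] H →ₗ[ℝ] H}
    (hact_symm : ∀ (f : A) (v w : H), ⟪act f v, w⟫ = ⟪v, act f w⟫)
    (hLeibniz : ∀ f g : A, par (f * g) = act f (par g) + act g (par f))
    {b : H} (hU : ∀ f : A, U (j f) = act f b)
    {S : Set A} {f₁ f₂ d₁ d₂ w₁ w₂ : H₀} {g₁ g₂ u₁ u₂ : A}
    (hd₁ : ∀ φ ∈ S, ⟪U f₁, par φ⟫ = ⟪d₁, j φ⟫)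
    (hd₂ : ∀ φ ∈ S, ⟪U f₂, par φ⟫ = ⟪d₂, j φ⟫)
    (hf₁ : f₁ = j g₁ + U.symm (par u₁) + w₁)
    (hf₂ : f₂ = j g₂ + U.symm (par u₂) + w₂)
    (hz₁ : -d₁ - U.symm (par g₁) ∈ perpKer par U)
    (hz₂ : -d₂ - U.symm (par g₂) ∈ perpKer par U) :
    ⟪-d₁, f₂⟫ + ⟪f₁, -d₂⟫ =
      normalPart j par U f₁ (-d₁) g₂ + normalPart j par U f₂ (-d₂) g₁ - ⟪b, par (g₁ * g₂)⟫
        + ⟪w₁, -d₂ - U.symm (par g₂)⟫ + ⟪-d₁ - U.symm (par g₁), w₂⟫ := by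
  have h₁₂ := inner_eq_of_sub_mem_perpKer hz₁ hf₂
  have h₂₁ := inner_eq_of_sub_mem_perpKer hz₂ hf₁
  rw [real_inner_comm (-d₂) f₁, real_inner_comm (-d₂ - _) w₁, h₁₂, h₂₁, normalPart_apply,
    normalPart_apply, inner_map_mul_of_leibniz hact_symm hLeibniz, ← hU, ← hU]
  ring

end MartingaleDimensionOne

/-- **Integration by parts on spaces of martingale dimension one** (Theorem `IbP`):
suppose `b` is divergence free with respect to `B`.  If `f₁, f₂ ∈ D(∂_B^⊥)` admit
representations `fᵢ = j gᵢ + U⁻¹(∂uᵢ) + wᵢ` with `gᵢ, uᵢ ∈ 𝒞`, `∂uᵢ ∈ D(∂_B*)`,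
`wᵢ ∈ ker ∂^⊥`, and `zᵢ := ∂_B^⊥ fᵢ − U⁻¹(∂gᵢ) ∈ ker ∂^⊥`, then
`⟨∂_B^⊥f₁, f₂⟩ + ⟨f₁, ∂_B^⊥f₂⟩ = n_B(f₁b)(g₂) + n_B(f₂b)(g₁) − n_B b(g₁g₂) + ⟨w₁,z₂⟩ + ⟨z₁,w₂⟩`.
Here `dᵢ` denotes the (unique) adjoint value `∂_B*(U fᵢ)`, so that `∂_B^⊥ fᵢ = −dᵢ`,
`n_B(fᵢb)(φ) = ⟨U fᵢ, ∂φ⟩ + ⟨−dᵢ, jφ⟩` and `n_B b(ψ) = ⟨b, ∂ψ⟩`. -/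
theorem stmt_10
    {X : Type*} [MetricSpace X] [CompactSpace X]
    {H : Type*} [NormedAddCommGroup H] [InnerProductSpace ℝ H] [CompleteSpace H]
    {H₀ : Type*} [NormedAddCommGroup H₀] [InnerProductSpace ℝ H₀] [CompleteSpace H₀]
    (𝒞 : Subalgebra ℝ C(X, ℝ))
    (act : 𝒞 →ₗ[ℝ] H →ₗ[ℝ] H)
    (hact_one : ∀ v : H, act 1 v = v)
    (hact_symm : ∀ (f : 𝒞) (v w : H), ⟪act f v, w⟫ = ⟪v, act f w⟫)
    (hact_bound : ∀ (f : 𝒞) (v : H), ‖act f v‖ ≤ ‖(f : C(X, ℝ))‖ * ‖v‖)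
    (par : 𝒞 →ₗ[ℝ] H)
    (hLeibniz : ∀ f g : 𝒞, par (f * g) = act f (par g) + act g (par f))
    (B : Set X) (hB : IsClosed B)
    (b : H) (hbne : b ≠ 0)
    (hdivfree : ∀ φ : 𝒞, (∀ x ∈ B, (φ : C(X, ℝ)) x = 0) → ⟪b, par φ⟫ = 0)
    (j : 𝒞 →ₗ[ℝ] H₀) (hjinj : Function.Injective j)
    (hjdense : Dense (⇑j '' {f : 𝒞 | ∀ x ∈ B, (f : C(X, ℝ)) x = 0}))
    (U : H₀ ≃ₗᵢ[ℝ] H) (hU : ∀ f : 𝒞, U (j f) = act f b) :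
    ∀ (f₁ f₂ d₁ d₂ : H₀) (g₁ g₂ u₁ u₂ : 𝒞) (w₁ w₂ : H₀),
      -- `fᵢ ∈ D(∂_B^⊥)` with `∂_B*(U fᵢ) = dᵢ`
      (∀ φ : 𝒞, (∀ x ∈ B, (φ : C(X, ℝ)) x = 0) → ⟪U f₁, par φ⟫ = ⟪d₁, j φ⟫) →
      (∀ φ : 𝒞, (∀ x ∈ B, (φ : C(X, ℝ)) x = 0) → ⟪U f₂, par φ⟫ = ⟪d₂, j φ⟫) →
      -- `∂uᵢ ∈ D(∂_B*)`
      (∃ e₁ : H₀, ∀ φ : 𝒞, (∀ x ∈ B, (φ : C(X, ℝ)) x = 0) → ⟪par u₁, par φ⟫ = ⟪e₁, j φ⟫) →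
      (∃ e₂ : H₀, ∀ φ : 𝒞, (∀ x ∈ B, (φ : C(X, ℝ)) x = 0) → ⟪par u₂, par φ⟫ = ⟪e₂, j φ⟫) →
      -- `wᵢ ∈ ker ∂^⊥`
      (∀ φ : 𝒞, ⟪U w₁, par φ⟫ = 0) →
      (∀ φ : 𝒞, ⟪U w₂, par φ⟫ = 0) →
      -- the representations
      f₁ = j g₁ + U.symm (par u₁) + w₁ →
      f₂ = j g₂ + U.symm (par u₂) + w₂ →
      -- `zᵢ := ∂_B^⊥ fᵢ − U⁻¹(∂gᵢ) = −dᵢ − U⁻¹(∂gᵢ) ∈ ker ∂^⊥`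
      (∀ φ : 𝒞, ⟪U (-d₁ - U.symm (par g₁)), par φ⟫ = 0) →
      (∀ φ : 𝒞, ⟪U (-d₂ - U.symm (par g₂)), par φ⟫ = 0) →
      ⟪-d₁, f₂⟫ + ⟪f₁, -d₂⟫ =
        (⟪U f₁, par g₂⟫ + ⟪-d₁, j g₂⟫) + (⟪U f₂, par g₁⟫ + ⟪-d₂, j g₁⟫)
          - ⟪b, par (g₁ * g₂)⟫
          + ⟪w₁, -d₂ - U.symm (par g₂)⟫ + ⟪-d₁ - U.symm (par g₁), w₂⟫ := by
  intro f₁ f₂ d₁ d₂ g₁ g₂ u₁ u₂ w₁ w₂ hd₁ hd₂ _ _ _ _ hf₁ hf₂ hz₁ hz₂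
  exact stmt_10_general hact_symm hLeibniz hU (S := {φ | ∀ x ∈ B, (φ : C(X, ℝ)) x = 0})
    hd₁ hd₂ hf₁ hf₂ (mem_perpKer.2 hz₁) (mem_perpKer.2 hz₂)
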